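/- Let μ and ν be Borel probability measures on ℝᵐ with finite first moments. There exists a pair of random vectors (X, Y) with X distributed as μ, Y distributed as ν, and E[Y | X] = X almost surely (i.e. a one-step martingale with marginals μ and ν) if and only if μ is dominated by ν in the convex order (∫ f dμ ≤ ∫ f dν for all convex f : ℝᵐ → ℝ). -/

import Mathlib

open MeasureTheory

open Asymptotics Filter Set Topology
open scoped BoundedContinuousFunction CompactlySupported NNReal

/-!
One direction is the conditional Jensen inequality. The other is a duality argument. Pricing the
payoff `a x + b y + h x (y - x)` at `∫ a ∂μ + ∫ b ∂ν` is a positive functional: if the payoff is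
nonnegative, then `y ↦ ⨆ x, (-a x - h x (y - x))` is a convex function between `-a` and `b`, and the
convex order gives `-∫ a ∂μ ≤ ∫ b ∂ν`. By M. Riesz it extends to a positive functional on all
continuous functions of linear growth on the product. The extension is an integral because no mass
escapes to infinity: the tail of the weight `1 + ‖(x, y)‖` is dominated by the sum of the tails in
`x` and in `y`, whose price tends to zero. The representing measure has marginals `μ` and `ν`, and
pricing `h x (y - x)` at zero is the martingale property.
-/

/-! ### Positive extension of functionals -/

theorem exists_positiveLinearMap_comp_eq {V W : Type*} [AddCommGroup V] [PartialOrder V]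
    [IsOrderedAddMonoid V] [Module ℝ V] [PosSMulMono ℝ V] [AddCommMonoid W] [Module ℝ W]
    (T : W →ₗ[ℝ] V) (l : W →ₗ[ℝ] ℝ) (hl : ∀ w, 0 ≤ T w → 0 ≤ l w) (hT : ∀ v, ∃ w, v ≤ T w) :
    ∃ L : V →ₚ[ℝ] ℝ, ∀ w, L (T w) = l w := by
  let _ : AddCommGroup W := Module.addCommMonoidToAddCommGroup ℝ
  -- Extending `(0, w) ↦ l w` along the cone `{(v, w) | 0 ≤ v + T w}` of `V × W` avoids
  -- descending `l` to the range of `T`.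
  let s : PointedCone ℝ (V × W) :=
    (PointedCone.positive ℝ V).comap (LinearMap.id.coprod T)
  let f : (V × W) →ₗ.[ℝ] ℝ :=
    ⟨Submodule.prod ⊥ ⊤, l ∘ₗ LinearMap.snd ℝ V W ∘ₗ Submodule.subtype _⟩
  have hs (v : V) (w : W) : (v, w) ∈ s ↔ 0 ≤ v + T w := Iff.rfl
  obtain ⟨g, hgf, hgs⟩ := riesz_extension s f
    (by
      rintro ⟨⟨v, w⟩, hv, _⟩ (hvw : 0 ≤ v + T w)
      rw [show v = 0 from hv, zero_add] at hvw
      exact hl w hvw)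
    (by
      rintro ⟨v, w⟩
      obtain ⟨w', hw'⟩ := hT (-v)
      refine ⟨⟨(0, w' - w), rfl, trivial⟩, ?_⟩
      rw [Prod.mk_add_mk, hs, zero_add, sub_add_cancel]
      exact neg_le_iff_add_nonneg'.1 hw')
  have hg (v : V) (w : W) : g (v, w) = g (v, 0) + l w := by
    have hgl : g (0, w) = l w := hgf ⟨(0, w), rfl, trivial⟩
    rw [← hgl, ← map_add, Prod.mk_add_mk, add_zero, zero_add]
  refine ⟨.mk₀ (g ∘ₗ LinearMap.inl ℝ V W) fun v hv => hgs _ (by simpa [hs] using hv), fun w => ?_⟩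
  have hge : 0 ≤ g (T w, -w) := hgs _ (by simp [hs])
  have hle : 0 ≤ g (-(T w, -w)) := hgs _ (by simp [hs])
  rw [map_neg, neg_nonneg] at hle
  have h0 : g (T w, 0) + l (-w) = 0 := hg _ _ ▸ hle.antisymm hge
  rwa [map_neg, add_neg_eq_zero] at h0

/-! ### Functionals on spaces of functions of controlled growth -/

/-- The space of continuous functions `f` with `|f| ≤ C * |w|` for some constant `C`, the domain of
the functionals to be represented by measures that integrate the weight `w`. -/
def growthSpace {X : Type*} [TopologicalSpace X] (w : C(X, ℝ)) : Submodule ℝ C(X, ℝ) where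
  carrier := {f | ⇑f =O[⊤] ⇑w}
  zero_mem' := isBigO_zero _ _
  add_mem' hf hg := hf.add hg
  smul_mem' c _ hf := hf.const_smul_left c

namespace growthSpace

variable {X : Type*} [TopologicalSpace X] {w : C(X, ℝ)}

instance : PosSMulMono ℝ (growthSpace w) where
  smul_le_smul_of_nonneg_left _ hc _ _ hfg x := mul_le_mul_of_nonneg_left (hfg x) hc

theorem exists_abs_le (hw : 0 ≤ w) (f : growthSpace w) : ∃ C, 0 ≤ C ∧ ∀ x, |f.1 x| ≤ C * w x := by
  obtain ⟨C, hC, hfC⟩ := f.2.exists_nonneg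
  refine ⟨C, hC, fun x => (isBigOWith_top.1 hfC x).trans_eq ?_⟩
  rw [show ‖w x‖ = w x from Real.norm_of_nonneg (hw x)]

theorem mem_of_abs_le {f : C(X, ℝ)} {C : ℝ} (hf : ∀ x, |f x| ≤ C * w x) : f ∈ growthSpace w :=
  (IsBigO.of_bound' (Eventually.of_forall fun x => (hf x).trans (le_abs_self _))).trans
    (isBigO_const_mul_self C _ _)

theorem integrable [MeasurableSpace X] [OpensMeasurableSpace X] {m : Measure X}
    (hm : Integrable w m) (f : growthSpace w) : Integrable f.1 m := by
  obtain ⟨C, hC⟩ := isBigO_top.1 f.2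
  exact (hm.norm.const_mul C).mono' f.1.continuous.aestronglyMeasurable (.of_forall hC)

/-- Integration against a measure that integrates the weight, as a linear functional on
`growthSpace w`. -/
noncomputable def integralₗ [MeasurableSpace X] [OpensMeasurableSpace X] {m : Measure X}
    (hm : Integrable w m) : growthSpace w →ₗ[ℝ] ℝ where
  toFun f := ∫ x, f.1 x ∂m
  map_add' f g := integral_add (integrable hm f) (integrable hm g)
  map_smul' c _ := integral_const_mul c _

theorem compactlySupported_mem (hw : ∀ x, 0 < w x) (f : C_c(X, ℝ)) :
    (f : C(X, ℝ)) ∈ growthSpace w := by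
  have hsupp : HasCompactSupport fun x => (w x)⁻¹ * f x := f.hasCompactSupport.mul_left
  obtain ⟨C, hC⟩ := hsupp.exists_bound_of_continuous
    ((w.continuous.inv₀ fun x => (hw x).ne').mul f.continuous)
  refine mem_of_abs_le (C := C) fun x => ?_
  simpa [abs_of_pos (hw x), inv_mul_le_iff₀ (hw x), mul_comm C] using hC x

/-- The inclusion of the compactly supported functions in `growthSpace w`, as a positive linear
map; it turns functionals on `growthSpace w` into functionals that Riesz–Markov–Kakutani applies
to. -/
def ofCompactlySupported (hw : ∀ x, 0 < w x) : C_c(X, ℝ) →ₚ[ℝ] growthSpace w :=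
  .mk₀
    { toFun f := ⟨f, compactlySupported_mem hw f⟩
      map_add' _ _ := rfl
      map_smul' _ _ := rfl }
    fun _ hf => hf

theorem tendsto_apply_smul_cutoff (hw : ∀ x, 0 < w x) (L : growthSpace w →ₚ[ℝ] ℝ)
    {χ : ℕ → C_c(X, ℝ)} (hχ : ∀ n x, χ n x ≤ 1) {t : ℕ → growthSpace w}
    (ht : ∀ n x, w x * (1 - χ n x) ≤ (t n).1 x) (hLt : Tendsto (fun n => L (t n)) atTop (𝓝 0))
    (f : growthSpace w) :
    Tendsto (fun n => L (ofCompactlySupported hw (f.1 • χ n))) atTop (𝓝 (L f)) := by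
  obtain ⟨C, hC, hfC⟩ := exists_abs_le (fun x => (hw x).le) f
  have hbound (n : ℕ) (x : X) : |f.1 x * χ n x - f.1 x| ≤ C * (t n).1 x := by
    have hχ' : 0 ≤ 1 - χ n x := sub_nonneg.2 (hχ n x)
    calc |f.1 x * χ n x - f.1 x| = |f.1 x| * (1 - χ n x) := by
          rw [← mul_sub_one, abs_mul, abs_sub_comm, abs_of_nonneg hχ']
      _ ≤ C * (w x * (1 - χ n x)) := by
          rw [← mul_assoc]
          exact mul_le_mul_of_nonneg_right (hfC x) hχ'
      _ ≤ C * (t n).1 x := mul_le_mul_of_nonneg_left (ht n x) hC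
  rw [tendsto_iff_norm_sub_tendsto_zero]
  refine squeeze_zero (fun _ => norm_nonneg _) (fun n => ?_) (by simpa using hLt.const_mul C)
  rw [← map_sub, Real.norm_eq_abs, abs_le, ← smul_eq_mul, ← map_smul, ← map_neg]
  exact ⟨OrderHomClass.mono L fun x => (abs_le.1 (hbound n x)).1,
    OrderHomClass.mono L fun x => (abs_le.1 (hbound n x)).2⟩

section Representation

variable [T2Space X] [LocallyCompactSpace X] [MeasurableSpace X] [BorelSpace X]
  (hw : ∀ x, 0 < w x) (L : growthSpace w →ₚ[ℝ] ℝ)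

/-- The Riesz–Markov–Kakutani measure of a positive functional on `growthSpace w`. It represents
`L` on compactly supported functions only; see `integral_rieszMeasure` for a criterion for it to
represent `L` on the whole space. -/
noncomputable def rieszMeasure : Measure X :=
  RealRMK.rieszMeasure (L.comp (ofCompactlySupported hw))

theorem integral_smul_rieszMeasure (f : growthSpace w) (ψ : C_c(X, ℝ)) :
    ∫ x, f.1 x * ψ x ∂(rieszMeasure hw L) = L (ofCompactlySupported hw (f.1 • ψ)) :=
  RealRMK.integral_rieszMeasure (L.comp (ofCompactlySupported hw)) (f.1 • ψ)

theorem integrable_weight_rieszMeasure {χ : ℕ → C_c(X, ℝ)} (hχ : ∀ n x, χ n x ∈ Icc 0 1)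
    (hχ1 : ∀ x, Tendsto (χ · x) atTop (𝓝 1)) : Integrable w (rieszMeasure hw L) := by
  have : IsFiniteMeasureOnCompacts (rieszMeasure hw L) := by unfold rieszMeasure; infer_instance
  let w' : growthSpace w := ⟨w, isBigO_refl _ _⟩
  have hbound (n : ℕ) :
      ∫⁻ x, ‖w x * χ n x‖ₑ ∂(rieszMeasure hw L) ≤ ENNReal.ofReal (L w') := by
    have hpos (x : X) : 0 ≤ w x * χ n x := mul_nonneg (hw x).le (hχ n x).1
    have hint : Integrable (fun x => w x * χ n x) (rieszMeasure hw L) :=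
      (w • χ n).continuous.integrable_of_hasCompactSupport (w • χ n).hasCompactSupport
    rw [← ofReal_integral_norm_eq_lintegral_enorm hint]
    simp_rw [Real.norm_of_nonneg (hpos _)]
    rw [integral_smul_rieszMeasure hw L w']
    exact ENNReal.ofReal_le_ofReal <| OrderHomClass.mono L fun x =>
      mul_le_of_le_one_right (hw x).le (hχ n x).2
  have hfatou := Lp.eLpNorm_lim_le_liminf_eLpNorm (p := 1) (μ := rieszMeasure hw L)
    (f := fun n x => w x * χ n x) (fun n => by fun_prop) w
    (.of_forall fun x => by simpa using (hχ1 x).const_mul (w x))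
  rw [← memLp_one_iff_integrable]
  refine ⟨w.continuous.aestronglyMeasurable, hfatou.trans_lt <| lt_of_le_of_lt ?_
    (ENNReal.ofReal_lt_top (r := L w'))⟩
  refine liminf_le_of_frequently_le' (.of_forall fun n => ?_)
  rw [eLpNorm_one_eq_lintegral_enorm]
  exact hbound n

theorem integral_rieszMeasure {χ : ℕ → C_c(X, ℝ)} (hχ : ∀ n x, χ n x ∈ Icc 0 1)
    (hχ1 : ∀ x, Tendsto (χ · x) atTop (𝓝 1)) {t : ℕ → growthSpace w}
    (ht : ∀ n x, w x * (1 - χ n x) ≤ (t n).1 x) (hLt : Tendsto (fun n => L (t n)) atTop (𝓝 0))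
    (f : growthSpace w) : ∫ x, f.1 x ∂(rieszMeasure hw L) = L f := by
  refine tendsto_nhds_unique ?_
    (tendsto_apply_smul_cutoff hw L (fun n x => (hχ n x).2) ht hLt f)
  simp_rw [← integral_smul_rieszMeasure]
  have hf : Integrable f.1 (rieszMeasure hw L) :=
    integrable (integrable_weight_rieszMeasure hw L hχ hχ1) f
  refine tendsto_integral_of_dominated_convergence (fun x => |f.1 x|)
    (fun n => (f.1.continuous.mul (χ n).continuous).aestronglyMeasurable) hf.abs
    (fun n => .of_forall fun x => ?_)
    (.of_forall fun x => by simpa using (hχ1 x).const_mul (f.1 x))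
  rw [norm_mul, Real.norm_of_nonneg (hχ n x).1]
  exact mul_le_of_le_one_right (abs_nonneg _) (hχ n x).2

end Representation

end growthSpace

/-! ### Functions of linear growth -/

section LinearGrowth

variable (X : Type*) [NormedAddCommGroup X]

/-- The weight `x ↦ 1 + ‖x‖`, which is integrable for the finite measures with a finite first
moment. -/
def linearWeight : C(X, ℝ) where
  toFun x := 1 + ‖x‖

/-- The space of continuous real functions of at most linear growth on a normed space. -/
abbrev linearGrowth : Submodule ℝ C(X, ℝ) := growthSpace (linearWeight X)

variable {X}

theorem linearWeight_apply (x : X) : linearWeight X x = 1 + ‖x‖ := rfl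

theorem linearWeight_pos (x : X) : 0 < linearWeight X x := by
  rw [linearWeight_apply]; positivity

theorem boundedContinuous_mem_linearGrowth (f : X →ᵇ ℝ) : (f : C(X, ℝ)) ∈ linearGrowth X := by
  refine growthSpace.mem_of_abs_le (C := ‖f‖) fun x => (f.norm_coe_le_norm x).trans ?_
  exact le_mul_of_one_le_right (norm_nonneg f) (le_add_of_nonneg_right (norm_nonneg x))

theorem comp_mem_linearGrowth {Y : Type*} [NormedAddCommGroup Y] {g : C(Y, X)}
    (hg : ∀ y, ‖g y‖ ≤ ‖y‖) (f : linearGrowth X) : f.1.comp g ∈ linearGrowth Y := by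
  obtain ⟨C, hC, hf⟩ := growthSpace.exists_abs_le (fun x => (linearWeight_pos x).le) f
  exact growthSpace.mem_of_abs_le fun y => (hf (g y)).trans
    (mul_le_mul_of_nonneg_left (add_le_add_right (hg y) 1) hC)

theorem integrable_linearWeight [MeasurableSpace X] {m : Measure X} [IsFiniteMeasure m]
    (hm : Integrable (fun x => ‖x‖) m) : Integrable (linearWeight X) m :=
  (integrable_const 1).add hm

theorem isFiniteMeasure_of_integrable_linearWeight [MeasurableSpace X] {m : Measure X}
    (hm : Integrable (linearWeight X) m) : IsFiniteMeasure m :=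
  (integrable_const_iff_isFiniteMeasure (one_ne_zero (α := ℝ))).1 <|
    hm.mono' aestronglyMeasurable_const <| .of_forall fun x =>
      norm_one.trans_le (le_add_of_nonneg_right (norm_nonneg x))

section Cutoff

/-- The profile in the radius of `normCutoff`: equal to `1` on `[0, n]`, to `0` on `[n + 1, ∞)`, and
affine in between. -/
def radialCutoff (n : ℕ) (r : ℝ) : ℝ := max 0 (min 1 (n + 1 - r))

@[fun_prop]
theorem continuous_radialCutoff (n : ℕ) : Continuous (radialCutoff n) := by
  unfold radialCutoff; fun_prop

theorem radialCutoff_mem_Icc (n : ℕ) (r : ℝ) : radialCutoff n r ∈ Icc 0 1 :=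
  ⟨le_max_left _ _, max_le zero_le_one (min_le_left _ _)⟩

theorem radialCutoff_eq_zero {n : ℕ} {r : ℝ} (hr : n + 1 ≤ r) : radialCutoff n r = 0 :=
  max_eq_left ((min_le_right _ _).trans (sub_nonpos.2 hr))

theorem radialCutoff_eq_one {n : ℕ} {r : ℝ} (hr : r ≤ n) : radialCutoff n r = 1 := by
  rw [radialCutoff, min_eq_left (by linarith), max_eq_right zero_le_one]

theorem tendsto_radialCutoff (r : ℝ) : Tendsto (radialCutoff · r) atTop (𝓝 1) :=
  tendsto_const_nhds.congr' <| (eventually_ge_atTop ⌈r⌉₊).mono fun _ hn =>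
    (radialCutoff_eq_one ((Nat.le_ceil r).trans (Nat.cast_le.2 hn))).symm

/-- The radial cutoff functions, which increase to `1` and exhaust a proper normed space. -/
def normCutoff [ProperSpace X] (n : ℕ) : C_c(X, ℝ) where
  toFun x := radialCutoff n ‖x‖
  hasCompactSupport' := .intro (isCompact_closedBall 0 (n + 1)) fun x hx =>
    radialCutoff_eq_zero (by simpa using (not_le.1 (mt mem_closedBall_zero_iff.2 hx)).le)

/-- The part `(1 + ‖x‖) * (1 - radialCutoff n ‖x‖)` of the linear weight near infinity, a continuous
substitute for `(1 + ‖x‖) * 𝟙_{‖x‖ ≥ n}`. -/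
def linearTail (n : ℕ) : linearGrowth X where
  val := { toFun x := (1 + ‖x‖) * (1 - radialCutoff n ‖x‖) }
  property := growthSpace.mem_of_abs_le (C := 1) fun x => by
    have ⟨h0, h1⟩ := radialCutoff_mem_Icc n ‖x‖
    simp only [ContinuousMap.coe_mk, linearWeight_apply]
    rw [abs_of_nonneg (mul_nonneg (by positivity) (sub_nonneg.2 h1)), one_mul]
    exact mul_le_of_le_one_right (by positivity) (sub_le_self 1 h0)

theorem linearTail_apply (n : ℕ) (x : X) :
    (linearTail n).1 x = (1 + ‖x‖) * (1 - radialCutoff n ‖x‖) := rfl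

theorem linearTail_nonneg (n : ℕ) (x : X) : 0 ≤ (linearTail n).1 x :=
  mul_nonneg (by positivity) (sub_nonneg.2 (radialCutoff_mem_Icc n _).2)

theorem linearTail_prod_le {Y : Type*} [NormedAddCommGroup Y] (n : ℕ) (p : X × Y) :
    (linearTail n).1 p ≤ (linearTail n).1 p.1 + (linearTail n).1 p.2 := by
  rcases max_choice ‖p.1‖ ‖p.2‖ with h | h <;> rw [linearTail_apply n p, Prod.norm_def, h]
  · exact le_add_of_nonneg_right (linearTail_nonneg n p.2)
  · exact le_add_of_nonneg_left (linearTail_nonneg n p.1)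

theorem tendsto_integral_linearTail [MeasurableSpace X] [OpensMeasurableSpace X]
    {m : Measure X} (hm : Integrable (linearWeight X) m) :
    Tendsto (fun n => ∫ x, (linearTail n).1 x ∂m) atTop (𝓝 0) := by
  rw [← integral_zero X ℝ (μ := m)]
  refine tendsto_integral_of_dominated_convergence (linearWeight X)
    (fun n => (linearTail n).1.continuous.aestronglyMeasurable) hm
    (fun n => .of_forall fun x => ?_) (.of_forall fun x => ?_)
  · rw [Real.norm_of_nonneg (linearTail_nonneg n x)]
    exact mul_le_of_le_one_right (linearWeight_pos x).le
      (sub_le_self 1 (radialCutoff_mem_Icc n _).1)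
  · simpa [linearTail_apply] using ((tendsto_radialCutoff ‖x‖).const_sub 1).const_mul (1 + ‖x‖)

end Cutoff

end LinearGrowth

theorem map_eq_of_forall_integral_linearGrowth_eq {Ω X : Type*} [MeasurableSpace Ω]
    [NormedAddCommGroup X] [MeasurableSpace X] [BorelSpace X] {P : Measure Ω} [IsFiniteMeasure P]
    {μ : Measure X} [IsFiniteMeasure μ] {Z : Ω → X} (hZ : Measurable Z)
    (h : ∀ f : linearGrowth X, ∫ ω, f.1 (Z ω) ∂P = ∫ x, f.1 x ∂μ) : P.map Z = μ := by
  refine ext_of_forall_integral_eq_of_IsFiniteMeasure fun f => ?_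
  rw [integral_map hZ.aemeasurable f.continuous.aestronglyMeasurable]
  exact h ⟨f, boundedContinuous_mem_linearGrowth f⟩

/-! ### The convex order -/

theorem convexOn_ciSup {ι E : Type*} [Nonempty ι] [AddCommGroup E] [Module ℝ E] {s : Set E}
    {f : ι → E → ℝ} (hf : ∀ i, ConvexOn ℝ s (f i))
    (hbdd : ∀ x ∈ s, BddAbove (range (f · x))) : ConvexOn ℝ s fun x => ⨆ i, f i x := by
  refine ⟨(hf (Classical.arbitrary ι)).1, fun x hx y hy c d hc hd hcd => ciSup_le fun i => ?_⟩
  calc f i (c • x + d • y) ≤ c • f i x + d • f i y := (hf i).2 hx hy hc hd hcd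
    _ ≤ c • (⨆ i, f i x) + d • ⨆ i, f i y := by
        gcongr
        exacts [le_ciSup (hbdd x hx) i, le_ciSup (hbdd y hy) i]

theorem exists_convexOn_between {E : Type*} [AddCommGroup E] [Module ℝ E] {a b : E → ℝ}
    {h : E → E →ₗ[ℝ] ℝ} (hab : ∀ x y, 0 ≤ a x + b y + h x (y - x)) :
    ∃ g : E → ℝ, ConvexOn ℝ univ g ∧ ∀ x, -a x ≤ g x ∧ g x ≤ b x := by
  have hle (x y : E) : -a x - h x (y - x) ≤ b y := by linarith [hab x y]
  have hbdd (y : E) : BddAbove (range fun x => -a x - h x (y - x)) :=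
    ⟨b y, forall_mem_range.2 fun x => hle x y⟩
  have haff (x : E) : ConvexOn ℝ univ fun y => -a x - h x (y - x) := by
    refine ⟨convex_univ, fun y _ z _ c d _ _ hcd => le_of_eq ?_⟩
    obtain rfl : d = 1 - c := by linarith
    simp only [map_sub, map_add, map_smul, smul_eq_mul]
    ring
  exact ⟨fun y => ⨆ x, -a x - h x (y - x), convexOn_ciSup haff fun y _ => hbdd y,
    fun y => ⟨le_ciSup_of_le (hbdd y) y (by simp), ciSup_le fun x => hle x y⟩⟩

/-- The convex order on measures: `μ ⪯ ν` when `∫ f ∂μ ≤ ∫ f ∂ν` for every convex `f` that is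
integrable for both, so that neither integral is the junk value `0`. -/
def ConvexOrder {E : Type*} [AddCommGroup E] [Module ℝ E] [MeasurableSpace E]
    (μ ν : Measure E) : Prop :=
  ∀ f : E → ℝ, ConvexOn ℝ univ f → Integrable f μ → Integrable f ν → ∫ x, f x ∂μ ≤ ∫ x, f x ∂ν

theorem ConvexOrder.integral_add_integral_nonneg {E : Type*} [NormedAddCommGroup E]
    [NormedSpace ℝ E] [FiniteDimensional ℝ E] [MeasurableSpace E] [OpensMeasurableSpace E]
    {μ ν : Measure E} (hμν : ConvexOrder μ ν) {a b : E → ℝ} {h : E → E →ₗ[ℝ] ℝ}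
    (haμ : Integrable a μ) (haν : Integrable a ν) (hbμ : Integrable b μ) (hbν : Integrable b ν)
    (hab : ∀ x y, 0 ≤ a x + b y + h x (y - x)) : 0 ≤ ∫ x, a x ∂μ + ∫ y, b y ∂ν := by
  obtain ⟨g, hg, hagb⟩ := exists_convexOn_between hab
  have hgc : Continuous g := continuousOn_univ.1 (hg.continuousOn isOpen_univ)
  have hgμ : Integrable g μ := integrable_of_le_of_le hgc.aestronglyMeasurable
    (.of_forall fun x => (hagb x).1) (.of_forall fun x => (hagb x).2) haμ.neg hbμ
  have hgν : Integrable g ν := integrable_of_le_of_le hgc.aestronglyMeasurable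
    (.of_forall fun x => (hagb x).1) (.of_forall fun x => (hagb x).2) haν.neg hbν
  have : -∫ x, a x ∂μ ≤ ∫ y, b y ∂ν := calc
    -∫ x, a x ∂μ = ∫ x, -a x ∂μ := (integral_neg a).symm
    _ ≤ ∫ x, g x ∂μ := integral_mono haμ.neg hgμ fun x => (hagb x).1
    _ ≤ ∫ y, g y ∂ν := hμν g hg hgμ hgν
    _ ≤ ∫ y, b y ∂ν := integral_mono hgν hbν fun y => (hagb y).2
  linarith

/-! ### Conditional expectations -/

section Orthogonality

variable {Ω S F : Type*} [MeasurableSpace Ω] {m : Measure Ω}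
  [TopologicalSpace S] [HasOuterApproxClosed S] [MeasurableSpace S] [BorelSpace S]
  [NormedAddCommGroup F] [NormedSpace ℝ F] {X : Ω → S} {Z : Ω → F}

theorem setIntegral_preimage_eq_zero_of_isClosed (hX : Measurable X) (hZ : Integrable Z m)
    (h : ∀ g : S →ᵇ ℝ, ∫ ω, g (X ω) • Z ω ∂m = 0) {s : Set S} (hs : IsClosed s) :
    ∫ ω in X ⁻¹' s, Z ω ∂m = 0 := by
  let g (n : ℕ) : S →ᵇ ℝ := (hs.apprSeq n).comp _ NNReal.isometry_coe.lipschitz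
  have hgs : Tendsto (fun n => ∫ ω, g n (X ω) • Z ω ∂m) atTop (𝓝 (∫ ω in X ⁻¹' s, Z ω ∂m)) := by
    rw [← integral_indicator (hX hs.measurableSet)]
    refine tendsto_integral_of_dominated_convergence (fun ω => ‖Z ω‖)
      (fun n => ((g n).continuous.measurable.comp hX).aestronglyMeasurable.smul hZ.1) hZ.norm
      (fun n => .of_forall fun ω => ?_) (.of_forall fun ω => ?_)
    · rw [norm_smul]
      refine mul_le_of_le_one_left (norm_nonneg _) ?_
      exact (NNReal.norm_eq _).trans_le (HasOuterApproxClosed.apprSeq_apply_le_one hs n (X ω))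
    · have hlim : Tendsto (fun n => hs.apprSeq n (X ω)) atTop (𝓝 (s.indicator 1 (X ω))) :=
        tendsto_pi_nhds.1 (HasOuterApproxClosed.tendsto_apprSeq hs) (X ω)
      have hind : (X ⁻¹' s).indicator Z ω = ((s.indicator 1 (X ω) : ℝ≥0) : ℝ) • Z ω := by
        by_cases hω : X ω ∈ s <;> simp [hω]
      rw [hind]
      exact (NNReal.tendsto_coe.2 hlim).smul_const (Z ω)
  exact tendsto_nhds_unique hgs (by simp [h])

theorem setIntegral_preimage_eq_zero (hX : Measurable X) (hZ : Integrable Z m)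
    (h : ∀ g : S →ᵇ ℝ, ∫ ω, g (X ω) • Z ω ∂m = 0) {s : Set S} (hs : MeasurableSet s) :
    ∫ ω in X ⁻¹' s, Z ω ∂m = 0 := by
  induction s, hs using MeasurableSpace.induction_on_inter
    (BorelSpace.measurable_eq (α := S) ▸ borel_eq_generateFrom_isClosed) isPiSystem_isClosed with
  | empty => simp
  | basic s hs => exact setIntegral_preimage_eq_zero_of_isClosed hX hZ h hs
  | compl s hs ih =>
    have h1 : ∫ ω, Z ω ∂m = 0 := by simpa using h 1
    rw [preimage_compl, setIntegral_compl (hX hs) hZ, ih, h1, sub_zero]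
  | iUnion s hd hs ih =>
    rw [preimage_iUnion, integral_iUnion (fun n => hX (hs n)) (fun i j hij => (hd hij).preimage X)
      hZ.integrableOn]
    simp [ih]

theorem condExp_comap_ae_eq_zero [IsFiniteMeasure m] [CompleteSpace F]
    (hX : Measurable X) (hZ : Integrable Z m) (h : ∀ g : S →ᵇ ℝ, ∫ ω, g (X ω) • Z ω ∂m = 0) :
    m[Z | MeasurableSpace.comap X inferInstance] =ᵐ[m] 0 := by
  refine (ae_eq_condExp_of_forall_setIntegral_eq hX.comap_le hZ
    (fun _ _ _ => integrableOn_zero) ?_ aestronglyMeasurable_zero).symm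
  rintro _ ⟨s, hs, rfl⟩ -
  simp [setIntegral_preimage_eq_zero hX hZ h hs]

end Orthogonality

theorem integral_comp_le_integral_comp_of_condExp_ae_eq {Ω E : Type*} {m m₀ : MeasurableSpace Ω}
    {P : Measure Ω} [IsFiniteMeasure P] [NormedAddCommGroup E] [NormedSpace ℝ E]
    [CompleteSpace E] (hm : m ≤ m₀) {X Y : Ω → E} (hXY : P[Y | m] =ᵐ[P] X)
    {f : E → ℝ} (hf : ConvexOn ℝ univ f) (hfc : LowerSemicontinuous f)
    (hY : Integrable Y P) (hfX : Integrable (fun ω => f (X ω)) P)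
    (hfY : Integrable (fun ω => f (Y ω)) P) : ∫ ω, f (X ω) ∂P ≤ ∫ ω, f (Y ω) ∂P := by
  have hjensen : (fun ω => f (X ω)) ≤ᵐ[P] P[fun ω => f (Y ω) | m] := by
    filter_upwards [hXY, hf.map_condExp_le_univ hm hfc hY hfY] with ω hω hle
    rwa [Function.comp_apply, hω] at hle
  calc ∫ ω, f (X ω) ∂P ≤ ∫ ω, P[fun ω => f (Y ω) | m] ω ∂P :=
        integral_mono_ae hfX integrable_condExp hjensen
    _ = ∫ ω, f (Y ω) ∂P := integral_condExp hm

theorem condExp_comap_ae_eq_of_forall_integral_eq_zero {Ω F : Type*} [MeasurableSpace Ω]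
    {m : Measure Ω} [IsFiniteMeasure m] [NormedAddCommGroup F] [NormedSpace ℝ F] [CompleteSpace F]
    [SecondCountableTopology F] [MeasurableSpace F] [BorelSpace F] {X Y : Ω → F}
    (hX : Measurable X) (hXi : Integrable X m) (hYi : Integrable Y m)
    (h : ∀ (g : F →ᵇ ℝ) (l : StrongDual ℝ F), ∫ ω, g (X ω) * l (Y ω - X ω) ∂m = 0) :
    m[Y | MeasurableSpace.comap X inferInstance] =ᵐ[m] X := by
  have hYX : Integrable (Y - X) m := hYi.sub hXi
  have hzero : m[Y - X | MeasurableSpace.comap X inferInstance] =ᵐ[m] 0 := by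
    refine condExp_comap_ae_eq_zero hX hYX fun g => ?_
    have hgYX : Integrable (fun ω => g (X ω) • (Y - X) ω) m :=
      hYX.bdd_smul ‖g‖ (g.continuous.measurable.comp hX).aestronglyMeasurable
        (.of_forall fun ω => g.norm_coe_le_norm _)
    refine SeparatingDual.eq_zero_of_forall_dual_eq_zero (R := ℝ) fun l => ?_
    rw [← l.integral_comp_comm hgYX]
    simpa using h g l
  have hXX : m[X | MeasurableSpace.comap X inferInstance] = X :=
    condExp_of_stronglyMeasurable hX.comap_le (comap_measurable X).stronglyMeasurable hXi
  filter_upwards [condExp_sub hYi hXi (MeasurableSpace.comap X inferInstance), hzero] with ω h1 h2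
  rw [h1, Pi.sub_apply, hXX] at h2
  exact sub_eq_zero.1 h2

theorem convexOrder_map_of_condExp_ae_eq {Ω E : Type*} {m m₀ : MeasurableSpace Ω}
    {P : Measure Ω} [IsFiniteMeasure P] [NormedAddCommGroup E] [NormedSpace ℝ E]
    [FiniteDimensional ℝ E] [MeasurableSpace E] [BorelSpace E] (hm : m ≤ m₀) {X Y : Ω → E}
    (hX : AEMeasurable X P) (hY : Integrable Y P) (hXY : P[Y | m] =ᵐ[P] X) :
    ConvexOrder (P.map X) (P.map Y) := by
  intro f hf hfX hfY
  have hfc : Continuous f := continuousOn_univ.1 (hf.continuousOn isOpen_univ)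
  rw [integral_map hX hfc.aestronglyMeasurable,
    integral_map hY.aemeasurable hfc.aestronglyMeasurable]
  exact integral_comp_le_integral_comp_of_condExp_ae_eq hm hXY hf hfc.lowerSemicontinuous hY
    ((integrable_map_measure hfc.aestronglyMeasurable hX).1 hfX)
    ((integrable_map_measure hfc.aestronglyMeasurable hY.aemeasurable).1 hfY)

/-! ### Martingale couplings -/

section Payoff

variable {E : Type*} [NormedAddCommGroup E] [NormedSpace ℝ E]

theorem gain_mem_linearGrowth (h : E →ᵇ StrongDual ℝ E) :
    (⟨fun p => h p.1 (p.2 - p.1), by fun_prop⟩ : C(E × E, ℝ)) ∈ linearGrowth (E × E) := by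
  refine growthSpace.mem_of_abs_le (C := 2 * ‖h‖) fun p => ?_
  calc |h p.1 (p.2 - p.1)| ≤ ‖h p.1‖ * ‖p.2 - p.1‖ := (h p.1).le_opNorm _
    _ ≤ ‖h‖ * (2 * ‖p‖) := by
        gcongr
        · exact h.norm_coe_le_norm _
        · linarith [norm_sub_le p.2 p.1, norm_fst_le p, norm_snd_le p]
    _ ≤ 2 * ‖h‖ * linearWeight (E × E) p := by
        rw [← mul_assoc, mul_comm ‖h‖ 2]
        exact mul_le_mul_of_nonneg_left (le_add_of_nonneg_left zero_le_one) (by positivity)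

variable (E) in
/-- The payoff `(x, y) ↦ a x + b y + h x (y - x)` of static positions `a` and `b` and a trading
strategy `h`. A measure is a martingale coupling of `μ` and `ν` exactly when it prices all of them
at `∫ a ∂μ + ∫ b ∂ν`. -/
noncomputable def martingalePayoff :
    (linearGrowth E × linearGrowth E × (E →ᵇ StrongDual ℝ E)) →ₗ[ℝ] linearGrowth (E × E) where
  toFun w :=
    ⟨w.1.1.comp .fst, comp_mem_linearGrowth norm_fst_le w.1⟩ +
      ⟨w.2.1.1.comp .snd, comp_mem_linearGrowth norm_snd_le w.2.1⟩ +
      ⟨_, gain_mem_linearGrowth w.2.2⟩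
  map_add' w w' := by
    ext p
    simp only [Prod.fst_add, Prod.snd_add, Submodule.coe_add, ContinuousMap.add_comp,
      AddMemClass.mk_add_mk, BoundedContinuousFunction.coe_add, Pi.add_apply, add_apply, map_sub,
      ContinuousMap.add_apply, ContinuousMap.comp_apply, ContinuousMap.fst_apply,
      ContinuousMap.snd_apply, ContinuousMap.coe_mk]
    abel
  map_smul' c w := by
    ext p
    simp

theorem martingalePayoff_apply (a b : linearGrowth E) (h : E →ᵇ StrongDual ℝ E) (p : E × E) :
    (martingalePayoff E (a, b, h)).1 p = a.1 p.1 + b.1 p.2 + h p.1 (p.2 - p.1) := rfl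

theorem exists_le_martingalePayoff (v : linearGrowth (E × E)) :
    ∃ w, v ≤ martingalePayoff E w := by
  obtain ⟨C, hC, hv⟩ := growthSpace.exists_abs_le (fun p => (linearWeight_pos p).le) v
  let u : linearGrowth E := ⟨linearWeight E, isBigO_refl _ _⟩
  refine ⟨(C • u, C • u, 0), fun p => ?_⟩
  calc v.1 p ≤ C * (1 + ‖p‖) := (le_abs_self _).trans (hv p)
    _ ≤ C * ((1 + ‖p.1‖) + (1 + ‖p.2‖)) := by
        have hp : ‖p‖ ≤ ‖p.1‖ + ‖p.2‖ := max_le_add_of_nonneg (norm_nonneg _) (norm_nonneg _)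
        exact mul_le_mul_of_nonneg_left (by linarith) hC
    _ = (martingalePayoff E (C • u, C • u, 0)).1 p := by
        simp [martingalePayoff_apply, u, linearWeight_apply, mul_add]

variable [MeasurableSpace E] [BorelSpace E] [FiniteDimensional ℝ E] {μ ν : Measure E}

theorem ConvexOrder.exists_positiveLinearMap_martingalePayoff (hμν : ConvexOrder μ ν)
    (hμ : Integrable (linearWeight E) μ) (hν : Integrable (linearWeight E) ν) :
    ∃ L : linearGrowth (E × E) →ₚ[ℝ] ℝ, ∀ a b h,
      L (martingalePayoff E (a, b, h)) = ∫ x, a.1 x ∂μ + ∫ y, b.1 y ∂ν := by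
  let l : linearGrowth E × linearGrowth E × (E →ᵇ StrongDual ℝ E) →ₗ[ℝ] ℝ :=
    (growthSpace.integralₗ hμ).coprod ((growthSpace.integralₗ hν).coprod 0)
  have hl (a b h) : l (a, b, h) = ∫ x, a.1 x ∂μ + ∫ y, b.1 y ∂ν :=
    congrArg (∫ x, a.1 x ∂μ + ·) (add_zero _)
  have hl_nonneg (w) (hw : 0 ≤ martingalePayoff E w) : 0 ≤ l w := by
    obtain ⟨a, b, h⟩ := w
    have hab (x y : E) : 0 ≤ a.1 x + b.1 y + (h x).toLinearMap (y - x) := hw (x, y)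
    rw [hl]
    exact hμν.integral_add_integral_nonneg
      (growthSpace.integrable hμ a) (growthSpace.integrable hν a)
      (growthSpace.integrable hμ b) (growthSpace.integrable hν b) hab
  obtain ⟨L, hL⟩ :=
    exists_positiveLinearMap_comp_eq (martingalePayoff E) l hl_nonneg exists_le_martingalePayoff
  exact ⟨L, fun a b h => (hL (a, b, h)).trans (hl a b h)⟩

theorem ConvexOrder.exists_measure_integral_martingalePayoff (hμν : ConvexOrder μ ν)
    (hμ : Integrable (linearWeight E) μ) (hν : Integrable (linearWeight E) ν) :
    ∃ π : Measure (E × E), Integrable (linearWeight (E × E)) π ∧ ∀ a b h,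
      ∫ p, (martingalePayoff E (a, b, h)).1 p ∂π = ∫ x, a.1 x ∂μ + ∫ y, b.1 y ∂ν := by
  obtain ⟨L, hL⟩ := hμν.exists_positiveLinearMap_martingalePayoff hμ hν
  have hcut (n : ℕ) (p : E × E) : normCutoff n p ∈ Icc 0 1 := radialCutoff_mem_Icc n ‖p‖
  have hcut1 (p : E × E) : Tendsto (normCutoff · p) atTop (𝓝 1) := tendsto_radialCutoff ‖p‖
  have htail (n : ℕ) (p : E × E) : linearWeight (E × E) p * (1 - normCutoff n p) ≤
      (martingalePayoff E (linearTail n, linearTail n, 0)).1 p := by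
    rw [martingalePayoff_apply, BoundedContinuousFunction.coe_zero, Pi.zero_apply, zero_apply,
      add_zero]
    exact linearTail_prod_le n p
  have hLtail : Tendsto (fun n => L (martingalePayoff E (linearTail n, linearTail n, 0)))
      atTop (𝓝 0) := by
    simpa [hL] using (tendsto_integral_linearTail hμ).add (tendsto_integral_linearTail hν)
  refine ⟨growthSpace.rieszMeasure linearWeight_pos L,
    growthSpace.integrable_weight_rieszMeasure linearWeight_pos L hcut hcut1, fun a b h => ?_⟩
  rw [growthSpace.integral_rieszMeasure linearWeight_pos L hcut hcut1 htail hLtail, hL]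

theorem ConvexOrder.exists_martingaleCoupling [IsFiniteMeasure μ] [IsFiniteMeasure ν]
    (hμν : ConvexOrder μ ν) (hμ : Integrable (fun x => ‖x‖) μ)
    (hν : Integrable (fun x => ‖x‖) ν) :
    ∃ π : Measure (E × E), π.map Prod.fst = μ ∧ π.map Prod.snd = ν ∧
      π[Prod.snd | MeasurableSpace.comap Prod.fst inferInstance] =ᵐ[π] Prod.fst := by
  obtain ⟨π, hπ, hint⟩ := hμν.exists_measure_integral_martingalePayoff
    (integrable_linearWeight hμ) (integrable_linearWeight hν)
  have := isFiniteMeasure_of_integrable_linearWeight hπ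
  have hid : Integrable id π := hπ.mono' aestronglyMeasurable_id <| .of_forall fun p =>
    le_add_of_nonneg_left zero_le_one
  refine ⟨π, map_eq_of_forall_integral_linearGrowth_eq measurable_fst fun a => ?_,
    map_eq_of_forall_integral_linearGrowth_eq measurable_snd fun b => ?_,
    condExp_comap_ae_eq_of_forall_integral_eq_zero measurable_fst hid.fst hid.snd fun g l => ?_⟩
  · simpa [martingalePayoff_apply] using hint a 0 0
  · simpa [martingalePayoff_apply] using hint 0 b 0
  · have hgl (p : E × E) : (g • BoundedContinuousFunction.const E l) p.1 (p.2 - p.1) =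
        g p.1 * l (p.2 - p.1) := rfl
    simpa [martingalePayoff_apply, hgl, -map_sub] using hint 0 0 (g • .const E l)

end Payoff

theorem stmt_3_general {E : Type*} [NormedAddCommGroup E] [NormedSpace ℝ E]
    [FiniteDimensional ℝ E] [MeasurableSpace E] [BorelSpace E]
    (μ ν : Measure E) [IsFiniteMeasure μ] [IsFiniteMeasure ν]
    (hμ1 : Integrable (fun x => ‖x‖) μ) (hν1 : Integrable (fun x => ‖x‖) ν) :
    (∃ π : Measure (E × E), π.map Prod.fst = μ ∧ π.map Prod.snd = ν ∧
        π[Prod.snd | MeasurableSpace.comap Prod.fst inferInstance] =ᵐ[π] Prod.fst) ↔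
      ConvexOrder μ ν := by
  refine ⟨?_, fun hμν => hμν.exists_martingaleCoupling hμ1 hν1⟩
  rintro ⟨π, rfl, rfl, hmart⟩
  have : IsFiniteMeasure π := Measure.isFiniteMeasure_of_map measurable_fst.aemeasurable
  have hsnd : Integrable Prod.snd π :=
    (integrable_norm_iff measurable_snd.aestronglyMeasurable).1
      (hν1.comp_measurable measurable_snd)
  exact convexOrder_map_of_condExp_ae_eq measurable_fst.comap_le measurable_fst.aemeasurable
    hsnd hmart

/-- Strassen: For probability measures `μ, ν` on `ℝᵐ` with finite
first moments, there exists a one-step martingale `(X, Y)` with `X ∼ μ`, `Y ∼ ν`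
and `E[Y|X] = X` a.s. (formalized via a coupling `π` on `E × E` with the
conditional expectation of the second coordinate given the first equal a.s. to
the first coordinate) if and only if `μ` is dominated by `ν` in the convex
order. -/
theorem stmt_3 {E : Type*} [NormedAddCommGroup E] [NormedSpace ℝ E]
    [FiniteDimensional ℝ E] [MeasurableSpace E] [BorelSpace E]
    (μ ν : Measure E) [IsProbabilityMeasure μ] [IsProbabilityMeasure ν]
    (hμ1 : Integrable (fun x => ‖x‖) μ) (hν1 : Integrable (fun x => ‖x‖) ν) :
    (∃ π : Measure (E × E), IsProbabilityMeasure π ∧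
        π.map Prod.fst = μ ∧ π.map Prod.snd = ν ∧
        π[(fun p : E × E => p.2) | MeasurableSpace.comap Prod.fst inferInstance]
          =ᵐ[π] (fun p : E × E => p.1)) ↔
      (∀ f : E → ℝ, ConvexOn ℝ Set.univ f → Integrable f μ → Integrable f ν →
        ∫ x, f x ∂μ ≤ ∫ x, f x ∂ν) := by
  refine .trans ⟨fun ⟨π, _, hπ⟩ => ⟨π, hπ⟩, fun ⟨π, hfst, hπ⟩ => ⟨π, ?_, hfst, hπ⟩⟩
    (stmt_3_general μ ν hμ1 hν1)
  subst hfst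
  exact Measure.isProbabilityMeasure_of_map Prod.fst
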